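/- For every iterative learner M from informant and every semantically delayable learning restriction δ, there exists a canny iterative learner N such that every language that M Ex-learns from informant while satisfying δ on every informant for it is also Ex-learned from informant by N while satisfying δ on every informant for it; that is, InfδEx(M) ⊆ InfδEx(N). -/

import Mathlib

/-- `W p` is the domain of the `p`-th partial computable function
(the `W`-hypothesis space for an acceptable numbering). -/
def W (p : ℕ) : Set ℕ := {n | ((Denumerable.ofNat Nat.Partrec.Code p).eval n).Dom}

/-- A labeled datum: a natural number together with a Boolean label. -/
abbrev Datum := ℕ × Bool

/-- The initial segment `I[t]` of an informant `I`, of length `t`. -/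
def seg (I : ℕ → Datum) (t : ℕ) : List Datum := (List.range t).map I

/-- The positively labeled numbers occurring in a finite sequence. -/
def posOf (σ : List Datum) : Set ℕ := {x | (x, true) ∈ σ}

/-- The negatively labeled numbers occurring in a finite sequence. -/
def negOf (σ : List Datum) : Set ℕ := {x | (x, false) ∈ σ}

/-- A finite sequence over ℕ × Bool is consistently labeled. -/
def ConsistentSeq (σ : List Datum) : Prop :=
  ∀ x b b', (x, b) ∈ σ → (x, b') ∈ σ → b = b'

/-- `I` is an informant for the language `L`. -/
def IsInformant (L : Set ℕ) (I : ℕ → Datum) : Prop :=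
  (∀ t, ((I t).2 = true ↔ (I t).1 ∈ L)) ∧ Function.Surjective (fun t => (I t).1)

/-- `M` Ex-learns `L` from the particular informant `I`. -/
def ExLearnsFrom (M : List Datum →. ℕ) (L : Set ℕ) (I : ℕ → Datum) : Prop :=
  ∃ t₀ e, W e = L ∧ ∀ t, t₀ ≤ t → M (seg I t) = Part.some e

/-- `M` Ex-learns `L` from informant. -/
def ExLearns (M : List Datum →. ℕ) (L : Set ℕ) : Prop :=
  ∀ I, IsInformant L I → ExLearnsFrom M L I

/-- `M` is an iterative learner: its value on `σ⌢x` is computed from its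
value on `σ` and the datum `x` alone. -/
def Iterative (M : List Datum →. ℕ) : Prop :=
  ∃ h : ℕ × Datum →. ℕ, Partrec h ∧
    ∀ σ x, M (σ ++ [x]) = (M σ).bind (fun e => h (e, x))

/-- `𝓛 ∈ [ItInfEx]`: some iterative partial computable learner
Ex-learns every member of `𝓛` from informant. -/
def ItInfEx (𝓛 : Set (Set ℕ)) : Prop :=
  ∃ M : List Datum →. ℕ, Partrec M ∧ Iterative M ∧ ∀ L ∈ 𝓛, ExLearns M L

/-- A learner is canny: no single datum not occurring in `σ` causes a mind change twice. -/
def Canny (M : List Datum →. ℕ) : Prop :=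
  ∀ (σ : List Datum) (x : ℕ) (b : Bool), x ∉ σ.map Prod.fst →
    ∀ e e', M σ = Part.some e → M (σ ++ [(x, b)]) = Part.some e' → e ≠ e' →
      ∀ τ : List Datum, (σ ++ [(x, b)]) <+: τ → M (τ ++ [(x, b)]) = M τ

/-- An admissible simulating function: non-decreasing and unbounded. -/
def Admissible (s : ℕ → ℕ) : Prop := Monotone s ∧ ∀ x, ∃ t, x ≤ s t

/-- A predicate `δ` on (learner, informant) pairs is semantically delayable. -/
def SemDelayable (δ : (List Datum →. ℕ) → (ℕ → Datum) → Prop) : Prop :=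
  ∀ s : ℕ → ℕ, Admissible s →
    ∀ (M M' : List Datum →. ℕ) (I I' : ℕ → Datum),
      (∃ L, IsInformant L I) → (∃ L', IsInformant L' I') →
      (∀ t, posOf (seg I (s t)) ⊆ posOf (seg I' t) ∧
            negOf (seg I (s t)) ⊆ negOf (seg I' t) ∧
            ∃ e e', M (seg I (s t)) = Part.some e ∧ M' (seg I' t) = Part.some e' ∧
              W e' = W e) →
      δ M I → δ M' I'

/-- `L ∈ InfδEx(M)`: `M` Ex-learns `L` from informant and satisfies `δ` on every
informant for `L`. -/
def InfDeltaEx (δ : (List Datum →. ℕ) → (ℕ → Datum) → Prop)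
    (M : List Datum →. ℕ) (L : Set ℕ) : Prop :=
  ExLearns M L ∧ ∀ I, IsInformant L I → δ M I

namespace CannyProof

open Nat.Partrec

/-- Padding: a code with the same domain as the code of `k.unpair.1`, remembering `k`. -/
def P (k : ℕ) : ℕ :=
  Encodable.encode (Code.comp Code.left
    (Code.pair (Denumerable.ofNat Code k.unpair.1) (Code.const k.unpair.2)))

theorem P_inj : Function.Injective P := by
  intro a b h
  have h1 := Encodable.encode_injective h
  injection h1 with _ h2
  injection h2 with h3 h4
  have h5 := Code.const_inj h4
  have h6 : a.unpair.1 = b.unpair.1 := by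
    have := congrArg Encodable.encode h3
    simpa using this
  rw [← Nat.pair_unpair a, ← Nat.pair_unpair b, h5, h6]

theorem P_computable : Computable P := by
  unfold P
  have h1 : Computable (fun k : ℕ => Denumerable.ofNat Code k.unpair.1) :=
    (Computable.ofNat Code).comp (Computable.fst.comp Computable.unpair)
  have h2 : Computable (fun k : ℕ => Code.const k.unpair.2) :=
    Code.primrec_const.to_comp.comp (Computable.snd.comp Computable.unpair)
  have h3 := (Code.primrec₂_pair.to_comp).comp h1 h2
  exact Computable.encode.comp ((Code.primrec₂_comp.to_comp).comp (Computable.const Code.left) h3)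

theorem W_P (k : ℕ) : W (P k) = W k.unpair.1 := by
  ext n
  change ((Denumerable.ofNat Code (P k)).eval n).Dom ↔ _
  simp only [P, Denumerable.ofNat_encode]
  rcases Part.eq_none_or_eq_some ((Denumerable.ofNat Code k.unpair.1).eval n) with h | ⟨a, h⟩
  · simp [W, Code.eval, Seq.seq, Code.eval_const, h]
    rintro ⟨h, _⟩
    exact h
  · simp [W, Code.eval, Seq.seq, Code.eval_const, h]
    exact ⟨trivial, trivial⟩

/-- The data stored in the state. -/
def D (k : ℕ) : List Datum := (Encodable.decode (α := List Datum) k.unpair.2).getD []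

/-- One step of the simulation. -/
def step (h : ℕ × Datum →. ℕ) (k : ℕ) (x : Datum) : Part ℕ :=
  if x ∈ D k then Part.some k else
    (h (k.unpair.1, x)).map (fun e' => if e' = k.unpair.1 then k else
      Nat.pair e' (Encodable.encode (x :: D k)))

theorem D_computable : Computable D :=
  Computable.option_getD (Computable.decode.comp (Computable.snd.comp Computable.unpair))
    (Computable.const [])

theorem D_computable' : Computable (fun p : ℕ × Datum => D p.1) :=
  D_computable.comp Computable.fst

theorem mem_list_computable {α : Type} [Primcodable α] [DecidableEq α] :
    Computable (fun p : List α × α => decide (p.2 ∈ p.1)) := by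
  have hidx : Computable (fun p : List α × α => p.1.idxOf p.2) :=
    (Primrec.list_idxOf.to_comp).comp Computable.snd Computable.fst
  have hlen : Computable (fun p : List α × α => p.1.length) :=
    Computable.list_length.comp Computable.fst
  have h : Computable (fun p : List α × α => decide (p.1.idxOf p.2 < p.1.length)) :=
    (Primrec.nat_lt.decide.to_comp).comp hidx hlen
  refine h.of_eq ?_
  intro p
  simp only [List.idxOf_lt_length_iff]

theorem mem_computable : Computable (fun p : ℕ × Datum => decide (p.2 ∈ D p.1)) := by
  have h1 : Computable (fun p : ℕ × Datum => (D p.1, p.2)) :=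
    Computable.pair D_computable' Computable.snd
  have h2 := (mem_list_computable (α := Datum)).comp h1
  refine h2.of_eq ?_
  intro p
  exact decide_eq_decide.2 Iff.rfl

theorem fst_computable : Computable (fun p : ℕ × Datum => p.1.unpair.1) :=
  Computable.fst.comp (Computable.unpair.comp Computable.fst)

/-- The state after a (possible) mind change. -/
def newState (p : ℕ × Datum) (e' : ℕ) : ℕ :=
  if e' = p.1.unpair.1 then p.1 else Nat.pair e' (Encodable.encode (p.2 :: D p.1))

theorem cons_computable :
    Computable (fun p : ℕ × Datum => (Encodable.encode (p.2 :: D p.1) : ℕ)) :=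
  Computable.encode.comp (Computable.list_cons.comp Computable.snd D_computable')

theorem newState_computable : Computable₂ newState := by
  have hc2 : Computable (fun q : (ℕ × Datum) × ℕ => decide (q.2 = q.1.1.unpair.1)) :=
    (Primrec.eq.decide.to_comp).comp Computable.snd (fst_computable.comp Computable.fst)
  have h3 : Computable (fun q : (ℕ × Datum) × ℕ =>
      Nat.pair q.2 (Encodable.encode (q.1.2 :: D q.1.1))) :=
    (Primrec₂.natPair.to_comp).comp Computable.snd (cons_computable.comp Computable.fst)
  have h4 : Computable (fun q : (ℕ × Datum) × ℕ => q.1.1) :=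
    Computable.fst.comp Computable.fst
  refine (Computable.cond hc2 h4 h3).of_eq ?_
  intro q
  by_cases hq : q.2 = q.1.1.unpair.1
  · rw [newState, if_pos hq, decide_eq_true hq, cond_true]
  · rw [newState, if_neg hq, decide_eq_false hq, cond_false]

theorem step_partrec {h : ℕ × Datum →. ℕ} (hh : Partrec h) : Partrec₂ (step h) := by
  have hh1 : Partrec (fun p : ℕ × Datum => h (p.1.unpair.1, p.2)) :=
    hh.comp (Computable.pair fst_computable Computable.snd)
  have h2 : Partrec (fun p : ℕ × Datum => (h (p.1.unpair.1, p.2)).map (newState p)) :=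
    hh1.map newState_computable
  have h1 : Partrec (fun p : ℕ × Datum => Part.some p.1) := Computable.fst.partrec
  refine (Partrec.cond mem_computable h1 h2).of_eq ?_
  rintro ⟨k, x⟩
  by_cases hq : x ∈ D k
  · simp only [step, hq, decide_true, cond_true, if_true]
  · simp only [step, hq, decide_false, cond_false, if_false]
    rfl

/-- Partial computable inverse of the padding. -/
def unP : ℕ →. ℕ := fun p => Nat.rfind (PFun.lift fun k => decide (P k = p))

theorem unP_P (k : ℕ) : unP (P k) = Part.some k := by
  rw [Part.eq_some_iff, unP, Nat.mem_rfind]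
  refine ⟨by simp [PFun.lift], ?_⟩
  intro m hm
  have : P m ≠ P k := fun h => by have := P_inj h; omega
  simp [PFun.lift, this]

theorem P_of_mem {p k : ℕ} (h : k ∈ unP p) : P k = p := by
  have := Nat.rfind_spec h
  simpa [PFun.lift] using this

theorem unP_partrec : Partrec unP := by
  refine Partrec.rfind (p := fun p => PFun.lift fun k => decide (P k = p)) ?_
  exact ((Primrec.eq.decide.to_comp).comp
    (P_computable.comp Computable.snd) Computable.fst).partrec

/-- The update function of the new learner. -/
def upd (h : ℕ × Datum →. ℕ) : ℕ × Datum →. ℕ := fun q =>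
  (unP q.1).bind fun k => (step h k q.2).map P

theorem upd_partrec {h : ℕ × Datum →. ℕ} (hh : Partrec h) : Partrec (upd h) := by
  refine (unP_partrec.comp Computable.fst).bind ?_
  refine Partrec.map ?_ (P_computable.comp Computable.snd).to₂
  exact (step_partrec hh).comp Computable.snd (Computable.snd.comp Computable.fst)

theorem upd_P (h : ℕ × Datum →. ℕ) (k : ℕ) (x : Datum) :
    upd h (P k, x) = (step h k x).map P := by
  simp [upd, unP_P]

/-- Iterating an update function over a sequence. -/
def iter (g : ℕ × Datum →. ℕ) (p₀ : ℕ) : List Datum →. ℕ := fun σ =>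
  Nat.rec (Part.some p₀) (fun i IH => IH.bind fun e => g (e, (σ[i]?).getD (0, true))) σ.length

theorem iter_partrec {g : ℕ × Datum →. ℕ} (hg : Partrec g) (p₀ : ℕ) : Partrec (iter g p₀) := by
  refine Partrec.nat_rec (f := fun σ : List Datum => σ.length) (g := fun _ => Part.some p₀)
    (h := fun σ q => g (q.2, (σ[q.1]?).getD (0, true)))
    Computable.list_length (Computable.const p₀).partrec ?_
  refine hg.comp (Computable.pair (Computable.snd.comp Computable.snd) ?_)
  exact Computable.option_getD (Computable.list_getElem?.comp Computable.fst
    (Computable.fst.comp Computable.snd)) (Computable.const _)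

theorem iter_append (g : ℕ × Datum →. ℕ) (p₀ : ℕ) (σ : List Datum) (x : Datum) :
    iter g p₀ (σ ++ [x]) = (iter g p₀ σ).bind fun e => g (e, x) := by
  have key : ∀ n ≤ σ.length,
      (Nat.rec (Part.some p₀)
        (fun i IH => IH.bind fun e => g (e, ((σ ++ [x])[i]?).getD (0, true))) n : Part ℕ) =
      Nat.rec (Part.some p₀)
        (fun i IH => IH.bind fun e => g (e, (σ[i]?).getD (0, true))) n := by
    intro n
    induction n with
    | zero => intro _; rfl
    | succ n ih =>
      intro hn
      have hn' : n < σ.length := hn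
      simp only [ih (by omega)]
      rw [List.getElem?_append_left hn']
  unfold iter
  rw [List.length_append]
  simp only [List.length_singleton]
  rw [key _ le_rfl]
  simp

theorem step_mem {h : ℕ × Datum →. ℕ} {k : ℕ} {x : Datum} (hx : x ∈ D k) :
    step h k x = Part.some k := by
  simp [step, hx]

theorem step_not_mem {h : ℕ × Datum →. ℕ} {k : ℕ} {x : Datum} (hx : x ∉ D k) :
    step h k x = (h (k.unpair.1, x)).map (fun e' => if e' = k.unpair.1 then k else
      Nat.pair e' (Encodable.encode (x :: D k))) := by
  unfold step
  rw [if_neg hx]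

theorem D_pair (e : ℕ) (l : List Datum) : D (Nat.pair e (Encodable.encode l)) = l := by
  simp [D]

/-- A defined step either keeps the state or adds the datum. -/
theorem step_cases {h : ℕ × Datum →. ℕ} {k k' : ℕ} {x : Datum} (hk : k' ∈ step h k x) :
    k' = k ∨ D k' = x :: D k := by
  by_cases hx : x ∈ D k
  · rw [step_mem hx] at hk
    left; simpa using hk
  · rw [step_not_mem hx] at hk
    obtain ⟨e', _, rfl⟩ := (Part.mem_map_iff _).1 hk
    by_cases he : e' = k.unpair.1
    · simp [he]
    · right; rw [if_neg he, D_pair]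

theorem seg_succ (I : ℕ → Datum) (t : ℕ) : seg I (t + 1) = seg I t ++ [I t] := by
  simp [seg, List.range_succ]

theorem canny_iter (h : ℕ × Datum →. ℕ) (p₀ : ℕ) : Canny (iter (upd h) p₀) := by
  intro σ x b _ e e' h1 h2 hne τ hτ
  have hpre : ∀ ρ : List Datum, iter (upd h) p₀ (σ ++ [(x, b)] ++ ρ) = Part.none ∨
      ∃ k, iter (upd h) p₀ (σ ++ [(x, b)] ++ ρ) = Part.some (P k) ∧ (x, b) ∈ D k := by
    intro ρ
    induction ρ using List.reverseRecOn with
    | nil =>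
      right
      rw [iter_append, h1, Part.bind_some] at h2
      rw [List.append_nil, iter_append, h1, Part.bind_some, h2]
      have h3 := Part.eq_some_iff.1 h2
      obtain ⟨k, hk, h4⟩ := Part.mem_bind_iff.1 h3
      obtain ⟨k', hk', rfl⟩ := (Part.mem_map_iff _).1 h4
      refine ⟨k', rfl, ?_⟩
      rcases step_cases hk' with rfl | h5
      · exact absurd (P_of_mem hk).symm hne
      · rw [h5]; simp
    | append_singleton ρ y ih =>
      rw [← List.append_assoc, iter_append]
      rcases ih with ih | ⟨k, ih, hk⟩
      · left; rw [ih]; simp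
      · rw [ih, Part.bind_some, upd_P]
        rcases Part.eq_none_or_eq_some (step h k y) with h3 | ⟨k', h3⟩
        · left; rw [h3]; simp
        · right
          refine ⟨k', by rw [h3]; simp, ?_⟩
          rcases step_cases (Part.eq_some_iff.1 h3) with rfl | h5
          · exact hk
          · rw [h5]; exact List.mem_cons_of_mem _ hk
  obtain ⟨ρ, rfl⟩ := hτ
  rw [iter_append]
  rcases hpre ρ with h3 | ⟨k, h3, hk⟩
  · rw [h3]; simp
  · rw [h3, Part.bind_some, upd_P, step_mem hk]; simp

/-- The heart of the proof: simulation along the thinned-out informant. -/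
theorem simulation (M : List Datum →. ℕ) (h : ℕ × Datum →. ℕ)
    (hM : ∀ σ x, M (σ ++ [x]) = (M σ).bind (fun e => h (e, x)))
    (e₀ : ℕ) (he₀ : M [] = Part.some e₀) (L : Set ℕ) (hL : ExLearns M L)
    (I : ℕ → Datum) (hI : IsInformant L I) :
    ∃ (I' : ℕ → Datum) (s : ℕ → ℕ) (κ : ℕ → ℕ), IsInformant L I' ∧ Admissible s ∧
      (∀ t y, y ∈ seg I' (s t) → y ∈ seg I t) ∧
      (∀ t, iter (upd h) (P (Nat.pair e₀ (Encodable.encode ([] : List Datum)))) (seg I t)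
        = Part.some (P (κ t))) ∧
      (∀ t, M (seg I' (s t)) = Part.some (κ t).unpair.1) ∧
      ∃ t₀, ∀ t, t₀ ≤ t → κ t = κ t₀ := by
  classical
  set N := iter (upd h) (P (Nat.pair e₀ (Encodable.encode ([] : List Datum)))) with hN
  have hN0 : N [] = Part.some (P (Nat.pair e₀ (Encodable.encode ([] : List Datum)))) := rfl
  have hNs : ∀ σ x, N (σ ++ [x]) = (N σ).bind fun e => upd h (e, x) :=
    fun σ x => iter_append _ _ σ x
  -- stored data have been seen
  have hseen : ∀ t k, N (seg I t) = Part.some (P k) → ∀ y ∈ D k, y ∈ seg I t := by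
    intro t
    induction t with
    | zero =>
      intro k hk y hy
      have : seg I 0 = [] := by simp [seg]
      rw [this, hN0] at hk
      have := P_inj (Part.some_inj.1 hk)
      rw [← this, D_pair] at hy
      simp at hy
    | succ t ih =>
      intro k hk y hy
      rw [seg_succ, hNs] at hk
      obtain ⟨p, hp, hk1⟩ := Part.mem_bind_iff.1 (Part.eq_some_iff.1 hk)
      obtain ⟨k1, hk2, hk3⟩ := Part.mem_bind_iff.1 hk1
      obtain ⟨k2, hk4, hk5⟩ := (Part.mem_map_iff _).1 hk3
      have := P_inj hk5
      subst this
      have h6 := P_of_mem hk2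
      simp only at h6
      subst h6
      have ih' := ih k1 (Part.eq_some_iff.2 hp)
      rw [seg_succ, List.mem_append]
      rcases step_cases hk4 with rfl | h7
      · exact Or.inl (ih' y hy)
      · rw [h7] at hy
        rcases List.mem_cons.1 hy with rfl | hy
        · right; simp
        · exact Or.inl (ih' y hy)
  let ns : ℕ → Prop := fun t => ¬ ∃ k, N (seg I t) = Part.some (P k) ∧ I t ∈ D k
  -- every datum occurs at a non-skipped time
  have hns : ∀ t, ∃ t' ≤ t, I t' = I t ∧ ns t' := by
    intro t
    induction t using Nat.strong_induction_on with
    | _ t ih =>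
      by_cases ht : ns t
      · exact ⟨t, le_rfl, rfl, ht⟩
      · obtain ⟨k, hk, hk2⟩ := not_not.1 ht
        have := hseen t k hk _ hk2
        simp only [seg, List.mem_map, List.mem_range] at this
        obtain ⟨u, hu, hu2⟩ := this
        obtain ⟨t', h1, h2, h3⟩ := ih u hu
        exact ⟨t', by omega, h2.trans hu2, h3⟩
  have hinf : ({t | ns t}).Infinite := by
    intro hfin
    have h1 : (Set.univ : Set ℕ) ⊆ (fun t => (I t).1) '' {t | ns t} := by
      intro x _
      obtain ⟨t, ht⟩ := hI.2 x
      obtain ⟨t', _, h2, h3⟩ := hns t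
      exact ⟨t', h3, by simp only [h2]; exact ht⟩
    exact Set.infinite_univ ((hfin.image _).subset h1)
  let I' : ℕ → Datum := fun n => I (Nat.nth ns n)
  let s : ℕ → ℕ := Nat.count ns
  have hI'c : ∀ t, ns t → I' (s t) = I t := fun t ht => by
    simp only [I', s, Nat.nth_count ht]
  have hI' : IsInformant L I' := by
    refine ⟨fun t => hI.1 _, ?_⟩
    intro x
    obtain ⟨t, ht⟩ := hI.2 x
    obtain ⟨t', _, h2, h3⟩ := hns t
    refine ⟨s t', ?_⟩
    simp only [hI'c t' h3, h2]
    exact ht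
  have hs : Admissible s := by
    refine ⟨Nat.count_monotone ns, fun x => ⟨Nat.nth ns x, ?_⟩⟩
    simp only [s, Nat.count_nth_of_infinite hinf, le_refl]
  obtain ⟨n₀, e, hWe, hconv⟩ := hL I' hI'
  have hdef : ∀ n, ∃ a, M (seg I' n) = Part.some a := by
    have hdown : ∀ n, (M (seg I' (n + 1))).Dom → (M (seg I' n)).Dom := by
      intro n hn
      rw [seg_succ, hM] at hn
      exact (Part.bind_dom.1 hn).1
    have hall : ∀ d n, (M (seg I' (n + d))).Dom → (M (seg I' n)).Dom := by
      intro d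
      induction d with
      | zero => intro n hn; exact hn
      | succ d ih => intro n hn; exact ih n (hdown _ hn)
    intro n
    have : (M (seg I' n)).Dom := hall n₀ n (by rw [hconv _ (by omega)]; trivial)
    exact ⟨_, Part.eq_some_iff.2 (Part.get_mem this)⟩
  have hinv : ∀ t, ∃ k, N (seg I t) = Part.some (P k) ∧
      M (seg I' (s t)) = Part.some k.unpair.1 := by
    intro t
    induction t with
    | zero =>
      refine ⟨Nat.pair e₀ (Encodable.encode ([] : List Datum)), ?_, ?_⟩
      · simp [seg, hN0]
      · simp [s, seg, he₀]
    | succ t ih =>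
      obtain ⟨k, h1, h2⟩ := ih
      rw [seg_succ, hNs, h1, Part.bind_some, upd_P]
      by_cases hmem : I t ∈ D k
      · have : ¬ ns t := not_not.2 ⟨k, h1, hmem⟩
        refine ⟨k, by rw [step_mem hmem]; simp, ?_⟩
        have hs' : s (t + 1) = s t := by simp [s, Nat.count_succ, this]
        rw [hs']; exact h2
      · have hnt : ns t := by
          rintro ⟨k', h3, h4⟩
          rw [h1] at h3
          have := P_inj (Part.some_inj.1 h3)
          subst this
          exact hmem h4
        have hs' : s (t + 1) = s t + 1 := by simp [s, Nat.count_succ, hnt]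
        obtain ⟨a, ha⟩ := hdef (s t + 1)
        have hstep := ha
        rw [seg_succ, hM, h2, Part.bind_some, hI'c t hnt] at hstep
        rw [hs', ha, step_not_mem hmem, hstep]
        refine ⟨_, by rw [Part.map_some, Part.map_some], ?_⟩
        by_cases hae : a = k.unpair.1
        · simp [hae]
        · simp [hae]
  choose κ hκ1 hκ2 using hinv
  refine ⟨I', s, κ, hI', hs, ?_, hκ1, hκ2, ?_⟩
  · intro t y hy
    simp only [seg, List.mem_map, List.mem_range] at hy ⊢
    obtain ⟨n, hn, rfl⟩ := hy
    exact ⟨Nat.nth ns n, Nat.nth_lt_of_lt_count hn, rfl⟩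
  · obtain ⟨T, hT⟩ := hs.2 n₀
    refine ⟨T, fun t ht => ?_⟩
    induction t, ht using Nat.le_induction with
    | base => rfl
    | succ t ht ih =>
      rw [← ih]
      have hst : n₀ ≤ s t := hT.trans (hs.1 ht)
      have h1 := hκ1 (t + 1)
      rw [seg_succ, hNs, hκ1 t, Part.bind_some, upd_P] at h1
      by_cases hmem : I t ∈ D (κ t)
      · rw [step_mem hmem, Part.map_some] at h1
        exact (P_inj (Part.some_inj.1 h1)).symm
      · have hnt : ns t := by
          rintro ⟨k', h3, h4⟩
          rw [hκ1 t] at h3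
          have := P_inj (Part.some_inj.1 h3)
          rw [← this] at h4
          exact hmem h4
        have h2 := hconv (s t + 1) (by omega)
        have h3 := hκ2 t
        rw [hconv _ hst] at h3
        have h4 := Part.some_inj.1 h3
        rw [seg_succ, hM, hκ2 t, Part.bind_some, hI'c t hnt] at h2
        rw [step_not_mem hmem, h2, Part.map_some, Part.map_some, if_pos h4] at h1
        exact (P_inj (Part.some_inj.1 h1)).symm

end CannyProof

/-- For every iterative learner `M` and every semantically delayable restriction `δ`
there is a canny iterative learner `N` with `InfδEx(M) ⊆ InfδEx(N)`. -/
theorem canny_normal_form_delayable (M : List Datum →. ℕ) (hM : Partrec M)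
    (hit : Iterative M) (δ : (List Datum →. ℕ) → (ℕ → Datum) → Prop)
    (hδ : SemDelayable δ) :
    ∃ N : List Datum →. ℕ, Partrec N ∧ Iterative N ∧ Canny N ∧
      ∀ L : Set ℕ, InfDeltaEx δ M L → InfDeltaEx δ N L := by
  obtain ⟨h, hh, hMh⟩ := hit
  rcases Part.eq_none_or_eq_some (M []) with hnone | ⟨e₀, he₀⟩
  · have hall : ∀ σ, M σ = Part.none := by
      intro σ
      induction σ using List.reverseRecOn with
      | nil => exact hnone
      | append_singleton σ x ih => rw [hMh, ih]; simp
    refine ⟨M, hM, ⟨h, hh, hMh⟩, ?_, fun L hL => hL⟩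
    intro σ x b _ e e' h1
    rw [hall] at h1
    exact absurd h1.symm (Part.some_ne_none e)
  · refine ⟨CannyProof.iter (CannyProof.upd h)
        (CannyProof.P (Nat.pair e₀ (Encodable.encode ([] : List Datum)))),
      CannyProof.iter_partrec (CannyProof.upd_partrec hh) _,
      ⟨CannyProof.upd h, CannyProof.upd_partrec hh, CannyProof.iter_append _ _⟩,
      CannyProof.canny_iter h _, ?_⟩
    intro L hL
    refine ⟨fun I hI => ?_, fun I hI => ?_⟩
    · obtain ⟨I', s, κ, hI', hs, hc, h1, h2, t₀, ht₀⟩ :=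
        CannyProof.simulation M h hMh e₀ he₀ L hL.1 I hI
      refine ⟨t₀, CannyProof.P (κ t₀), ?_, fun t ht => by rw [h1, ht₀ t ht]⟩
      obtain ⟨n₀, e, hWe, hconv⟩ := hL.1 I' hI'
      obtain ⟨T, hT⟩ := hs.2 n₀
      have h3 := h2 (max T t₀)
      rw [hconv _ (hT.trans (hs.1 (le_max_left _ _))), ht₀ _ (le_max_right _ _)] at h3
      rw [CannyProof.W_P, ← Part.some_inj.1 h3, hWe]
    · obtain ⟨I', s, κ, hI', hs, hc, h1, h2, _⟩ :=
        CannyProof.simulation M h hMh e₀ he₀ L hL.1 I hI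
      refine hδ s hs M _ I' I ⟨L, hI'⟩ ⟨L, hI⟩ (fun t => ⟨?_, ?_, ?_⟩) (hL.2 I' hI')
      · intro x hx; exact hc t _ hx
      · intro x hx; exact hc t _ hx
      · exact ⟨_, _, h2 t, h1 t, CannyProof.W_P _⟩
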